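/- Let g ≥ 2 and N ≥ 2 be integers. In ℚ(u,v), with q := uv, J := (1+u)^g(1+v)^g, S := (1+u^2v)^g(1+uv^2)^g, K := (1-u^2)^g(1-v^2)^g and e_n := (1-q^n)/(1-q), set M_odd := ( J·S − q^g·J^2 ) / ((1-q)(1-q^2)) and M := ( 2·J·S − J^2·(1 + 2q^{g+1} − q^2) − K·(1-q)^2 ) / ( 2(1-q)(1-q^2) ). Then M_odd · [ M·e_{2N} + J·(J-1)·e_{g-1}·(e_{2N} − e_N) + J·e_g·(e_N − e_{N-1})·e_N + (1/2)·( J^2·e_N^2 + K·(1-q^{2N})/(1-q^2) ) − (1/2)·J·( e_N^2 + (1-q^{2N})/(1-q^2) ) + J·(1-q^{N-1})(1-q^N)/((1-q^2)(1-q)) ] = J^2·(1-q^N)·(q^g·J − S) / ((1-q)^3(1-q^2)^2) · ( J·(q^{g+1} + q^{N+g-1}) − S·(1 + q^N) ). -/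

import Mathlib

noncomputable section

/-- The field `ℚ(u,v)` of rational functions in two indeterminates over `ℚ`. -/
abbrev Kf : Type := FractionRing (MvPolynomial (Fin 2) ℚ)

/-- The indeterminate `u` in `ℚ(u,v)`. -/
def uu : Kf := algebraMap (MvPolynomial (Fin 2) ℚ) Kf (MvPolynomial.X 0)

/-- The indeterminate `v` in `ℚ(u,v)`. -/
def vv : Kf := algebraMap (MvPolynomial (Fin 2) ℚ) Kf (MvPolynomial.X 1)

/-- `q := uv`. -/
def qq : Kf := uu * vv

/-- `J := (1+u)^g (1+v)^g`. -/
def Jg (g : ℕ) : Kf := (1 + uu) ^ g * (1 + vv) ^ g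

/-- `S := (1+u²v)^g (1+uv²)^g`. -/
def Sg (g : ℕ) : Kf := (1 + uu ^ 2 * vv) ^ g * (1 + uu * vv ^ 2) ^ g

/-- `K := (1-u²)^g (1-v²)^g`. -/
def Kg (g : ℕ) : Kf := (1 - uu ^ 2) ^ g * (1 - vv ^ 2) ^ g

/-- `e_n := (1-qⁿ)/(1-q)`. -/
def ee (n : ℕ) : Kf := (1 - qq ^ n) / (1 - qq)

/-- `M_odd := (JS − q^g J²)/((1-q)(1-q²))`, the Hodge polynomial of the moduli space of rank 2
odd degree stable bundles. -/
def Modd (g : ℕ) : Kf := (Jg g * Sg g - qq ^ g * Jg g ^ 2) / ((1 - qq) * (1 - qq ^ 2))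

/-- `M := (2JS − J²(1+2q^{g+1}−q²) − K(1-q)²)/(2(1-q)(1-q²))`, the Hodge polynomial of
`M^s(2,d)`, `d` even. -/
def Mev (g : ℕ) : Kf :=
  (2 * Jg g * Sg g - Jg g ^ 2 * (1 + 2 * qq ^ (g + 1) - qq ^ 2) - Kg g * (1 - qq) ^ 2) /
    (2 * (1 - qq) * (1 - qq ^ 2))

theorem core_aux {F : Type*} [Field F] [CharZero F] (J S K q a b : F) (h1 : 1 - q ≠ 0)
    (h2 : 1 + q ≠ 0) :
    (J * S - a * q * J ^ 2) / ((1 - q) * (1 - q ^ 2)) *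
      ((2 * J * S - J ^ 2 * (1 + 2 * (a * q * q) - q ^ 2) - K * (1 - q) ^ 2) /
        (2 * (1 - q) * (1 - q ^ 2)) * ((1 - (b * q) ^ 2) / (1 - q)) +
        J * (J - 1) * ((1 - a) / (1 - q)) * ((1 - (b * q) ^ 2) / (1 - q) - (1 - b * q) / (1 - q)) +
        J * ((1 - a * q) / (1 - q)) * ((1 - b * q) / (1 - q) - (1 - b) / (1 - q)) *
          ((1 - b * q) / (1 - q)) +
        (1 / 2 : F) * (J ^ 2 * ((1 - b * q) / (1 - q)) ^ 2 + K * (1 - (b * q) ^ 2) / (1 - q ^ 2)) -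
        (1 / 2 : F) * J * (((1 - b * q) / (1 - q)) ^ 2 + (1 - (b * q) ^ 2) / (1 - q ^ 2)) +
        J * (1 - b) * (1 - b * q) / ((1 - q ^ 2) * (1 - q))) =
      J ^ 2 * (1 - b * q) * (a * q * J - S) / ((1 - q) ^ 3 * (1 - q ^ 2) ^ 2) *
        (J * (a * q * q + b * q * a) - S * (1 + b * q)) := by
  have h3 : 1 - q ^ 2 = (1 - q) * (1 + q) := by ring
  rw [h3]
  have h4 : (2 : F) ≠ 0 := two_ne_zero
  generalize hd : 1 - q = d at *
  generalize hc : 1 + q = c at *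
  field_simp
  subst hd hc
  ring

theorem qq_ne (c : ℚ) (hc : c ≠ 0) : (1 : Kf) + algebraMap (MvPolynomial (Fin 2) ℚ) Kf
    (MvPolynomial.C c) * qq ≠ 0 := by
  intro h
  have h' : algebraMap (MvPolynomial (Fin 2) ℚ) Kf
      (1 + MvPolynomial.C c * (MvPolynomial.X 0 * MvPolynomial.X 1)) = algebraMap _ Kf 0 := by
    rw [map_add, map_mul, map_mul, map_one, map_zero]
    exact h
  have h'' := IsFractionRing.injective (MvPolynomial (Fin 2) ℚ) Kf h'
  have := congrArg (MvPolynomial.eval (fun _ => (0 : ℚ))) h''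
  simp at this

/-- **Algebraic core of Theorem B.**  The stratification of the small-parameter moduli space
`N_{σ_m^+}(2,2,d₁,d₂)` (`d₁` odd, `d₂` even, `N = d₁-d₂-2g+2`) computed in the proof of
Theorem 7.1 sums to the closed formula of Theorem B. -/
theorem theoremB_algebraic_core (g N : ℕ) (hg : 2 ≤ g) (hN : 2 ≤ N) :
    Modd g *
        (Mev g * ee (2 * N) +
          Jg g * (Jg g - 1) * ee (g - 1) * (ee (2 * N) - ee N) +
          Jg g * ee g * (ee N - ee (N - 1)) * ee N +
          (1 / 2 : Kf) * (Jg g ^ 2 * ee N ^ 2 + Kg g * (1 - qq ^ (2 * N)) / (1 - qq ^ 2)) -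
          (1 / 2 : Kf) * Jg g * (ee N ^ 2 + (1 - qq ^ (2 * N)) / (1 - qq ^ 2)) +
          Jg g * (1 - qq ^ (N - 1)) * (1 - qq ^ N) / ((1 - qq ^ 2) * (1 - qq))) =
      Jg g ^ 2 * (1 - qq ^ N) * (qq ^ g * Jg g - Sg g) / ((1 - qq) ^ 3 * (1 - qq ^ 2) ^ 2) *
        (Jg g * (qq ^ (g + 1) + qq ^ (N + g - 1)) - Sg g * (1 + qq ^ N)) := by
  have h1 : (1 : Kf) - qq ≠ 0 := by
    have := qq_ne (-1) (by norm_num)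
    simpa [sub_eq_add_neg] using this
  have h2 : (1 : Kf) + qq ≠ 0 := by
    have := qq_ne 1 (by norm_num)
    simpa using this
  obtain ⟨k, rfl⟩ : ∃ k, g = k + 1 := ⟨g - 1, by omega⟩
  obtain ⟨n, rfl⟩ : ∃ n, N = n + 1 := ⟨N - 1, by omega⟩
  have e1 : n + 1 + (k + 1) - 1 = n + 1 + k := by omega
  have e2 : 2 * (n + 1) = (n + 1) * 2 := by omega
  have key := core_aux (Jg (k + 1)) (Sg (k + 1)) (Kg (k + 1)) qq (qq ^ k) (qq ^ n) h1 h2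
  unfold Modd Mev ee
  rw [e1, e2, Nat.add_sub_cancel, Nat.add_sub_cancel, pow_mul qq (n + 1) 2, pow_add qq (n + 1) k,
    pow_succ qq (k + 1), pow_succ qq k, pow_succ qq n]
  exact key

end
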